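/- For the principal ideal perturbation family, the ratio ‖δ̇_{r,n}(t)‖ / ‖δ_{r,n}(t)‖, where δ_{r,n}(t) := e^{i f_{r,n} t} α_{r,n}(t), equals ( f_{r,n}² − 2 f_{r,n} · A_{r,n} + B_{r,n} )^{1/2} with A_{r,n} := (∑_q C(r+kq+n,n) ε^{2q} q)/(∑_q C(r+kq+n,n) ε^{2q}) and B_{r,n} := (∑_q C(r+kq+n,n) ε^{2q} q²)/(∑_q C(r+kq+n,n) ε^{2q}); and since f_{r,n} = A_{r,n}, this ratio equals (B_{r,n} − A_{r,n}²)^{1/2}, which is unbounded in n (growing like n^{1/2}). -/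

import Mathlib

open Filter

noncomputable section

/-- The Drury-Arveson space `H²₂`, modeled as `ℓ²(ℕ × ℕ)` via the orthonormal basis
of normalized monomials. -/
abbrev DruryArveson2 : Type := lp (fun _ : ℕ × ℕ => ℂ) 2

/-- The monomial `z₁^m z₂^n ∈ H²₂`; it has squared norm `ω_{m,n} = C(m+n, m)⁻¹`. -/
def mono (m n : ℕ) : DruryArveson2 :=
  (Real.sqrt (((m + n).choose m : ℝ)⁻¹) : ℂ) • lp.single 2 (m, n) 1

/-- `α_{r,n}(t) = ∑_q C(r+kq+n, n) ε^q e^{-iqt} z₁^{r+kq} z₂^n`. -/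
def alphaDA (k r n : ℕ) (ε t : ℝ) : DruryArveson2 :=
  ∑' q : ℕ, (((r + k * q + n).choose n : ℂ) * ε ^ q * Complex.exp (-(Complex.I * q * t))) •
    mono (r + k * q) n

/-- The orthogonal complement `I(t)^⊥` of the closure of the ideal `I(t) = ⟨z₁^k − ε e^{it}⟩`
in `H²₂`: the closed span of the `α_{r,n}(t)`, `0 ≤ r < k`, `n ≥ 0`. -/
def Iperp (k : ℕ) (ε t : ℝ) : Submodule ℂ DruryArveson2 :=
  (Submodule.span ℂ
    (Set.range fun p : Fin k × ℕ => alphaDA k p.1 p.2 ε t)).topologicalClosure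

instance (k : ℕ) (ε t : ℝ) : CompleteSpace (Iperp k ε t) :=
  (Submodule.isClosed_topologicalClosure _).completeSpace_coe

/-- `A_{r,n} = (∑_q C(r+kq+n,n) ε^{2q} q)/(∑_q C(r+kq+n,n) ε^{2q})`, the frequency
`f_{r,n}` of the parallel transport. -/
def momA (k : ℕ) (ε : ℝ) (r n : ℕ) : ℝ :=
  (∑' q : ℕ, ((r + k * q + n).choose n : ℝ) * ε ^ (2 * q) * q) /
    (∑' q : ℕ, ((r + k * q + n).choose n : ℝ) * ε ^ (2 * q))

/-- `B_{r,n} = (∑_q C(r+kq+n,n) ε^{2q} q²)/(∑_q C(r+kq+n,n) ε^{2q})`. -/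
def momB (k : ℕ) (ε : ℝ) (r n : ℕ) : ℝ :=
  (∑' q : ℕ, ((r + k * q + n).choose n : ℝ) * ε ^ (2 * q) * (q : ℝ) ^ 2) /
    (∑' q : ℕ, ((r + k * q + n).choose n : ℝ) * ε ^ (2 * q))

/-- `δ_{r,n}(t) = e^{i f_{r,n} t} α_{r,n}(t)`. -/
def deltaSec (k r n : ℕ) (ε t : ℝ) : DruryArveson2 :=
  Complex.exp (Complex.I * (momA k ε r n : ℝ) * t) • alphaDA k r n ε t

/-- `δ̇_{r,n}(t)`, the (termwise) `t`-derivative of `δ_{r,n}(t)`. -/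
def deltaDot (k r n : ℕ) (ε t : ℝ) : DruryArveson2 :=
  ∑' q : ℕ, (Complex.I * ((momA k ε r n : ℝ) - (q : ℂ)) *
      (((r + k * q + n).choose n : ℂ) * ε ^ q * Complex.exp (-(Complex.I * q * t))) *
      Complex.exp (Complex.I * (momA k ε r n : ℝ) * t)) •
    mono (r + k * q) n

/-!
Since `δ` and `δ̇` are orthogonal series, their squared norms are moments of the weights
`C(r+kq+n, n) ε^{2q}`, so the ratio is the standard deviation of `q` under these weights. The
identity `(m + n + 1) C(m + n, n) = (n + 1) C(m + n + 1, n + 1)` expresses every moment through the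
total masses `Z_n`: with `T_n = Z_{n+1} / Z_n`, the variance of `k q` is
`(n + 1) T_n ((n + 2) T_{n+1} - (n + 1) T_n - 1)`. Writing `ε² = s^k`, the roots of unity filter
gives `Z_n ∼ 1 / (k s^r (1 - s)^{n+1})` up to an exponentially small relative error, whence
`T_n = 1 / (1 - s) + o(1 / n)`, and the variance of `q` is asymptotic to `n s / (k (1 - s))²`.
-/

section Orthogonality

lemma norm_sq_tsum_smul_of_orthonormal {𝕜 E ι : Type*} [RCLike 𝕜] [NormedAddCommGroup E]
    [InnerProductSpace 𝕜 E] [CompleteSpace E] {v : ι → E} (hv : Orthonormal 𝕜 v) {c : ι → 𝕜} {a : ℝ}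
    (hc : HasSum (fun i => ‖c i‖ ^ 2) a) : ‖∑' i, c i • v i‖ ^ 2 = a := by
  have hmem : Memℓp c 2 := memℓp_gen (by simpa using hc.summable)
  have htsum : ∑' i, c i • v i = hv.orthogonalFamily.linearIsometry ⟨c, hmem⟩ := by
    simp [OrthogonalFamily.linearIsometry_apply]
  have hnorm := lp.hasSum_norm (p := 2) (by norm_num) (⟨c, hmem⟩ : lp (fun _ : ι => 𝕜) 2)
  simp only [ENNReal.toReal_ofNat, Real.rpow_ofNat] at hnorm
  rw [htsum, LinearIsometry.norm_map]
  exact hnorm.unique hc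

variable {k : ℕ}

lemma orthonormal_single_progression (hk : k ≠ 0) (r n : ℕ) :
    Orthonormal ℂ fun q : ℕ => (lp.single 2 (r + k * q, n) 1 : DruryArveson2) := by
  rw [orthonormal_iff_ite]
  intro i j
  rw [lp.inner_single_left, lp.single_apply]
  simp [Pi.single_apply, hk]

lemma norm_sq_tsum_smul_mono (hk : k ≠ 0) (r n : ℕ) {b : ℕ → ℂ} {a : ℝ}
    (hb : HasSum (fun q => ‖b q‖ ^ 2 * ((r + k * q + n).choose n : ℝ)⁻¹) a) :
    ‖∑' q, b q • mono (r + k * q) n‖ ^ 2 = a := by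
  simp only [mono, smul_smul]
  refine norm_sq_tsum_smul_of_orthonormal (orthonormal_single_progression hk r n)
    (hb.congr_fun fun q => ?_)
  rw [norm_mul, mul_pow, Complex.norm_real, Real.norm_of_nonneg (Real.sqrt_nonneg _),
    Real.sq_sqrt (by positivity), Nat.choose_symm_add]

lemma norm_sq_tsum_smul_alphaDA_term (hk : k ≠ 0) (r n : ℕ) (ε t : ℝ) {c : ℕ → ℂ} {a : ℝ}
    (hc : HasSum (fun q => ‖c q‖ ^ 2 * (((r + k * q + n).choose n : ℝ) * (ε ^ 2) ^ q)) a) :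
    ‖∑' q : ℕ, (c q * (((r + k * q + n).choose n : ℂ) * ε ^ q *
      Complex.exp (-(Complex.I * q * t)))) • mono (r + k * q) n‖ ^ 2 = a := by
  refine norm_sq_tsum_smul_mono hk r n (hc.congr_fun fun q => ?_)
  have hchoose : ((r + k * q + n).choose n : ℝ) ≠ 0 := by
    exact_mod_cast (Nat.choose_pos (Nat.le_add_left _ _)).ne'
  have hexp : ‖Complex.exp (-(Complex.I * q * t))‖ = 1 := by simp [Complex.norm_exp]
  rw [norm_mul, norm_mul, norm_mul, hexp, norm_pow, Complex.norm_real, Complex.norm_natCast,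
    mul_one, mul_pow, mul_pow, ← pow_mul, mul_comm q 2, pow_mul, Real.norm_eq_abs, sq_abs]
  field_simp

end Orthogonality

section Moments

/-- The `i`-th moment of the weights `q ↦ C(r+kq+n, n) x^q` on `ℕ`; the case `i = 0` is their total
mass. -/
def weightMoment (k r n : ℕ) (x : ℝ) (i : ℕ) : ℝ :=
  ∑' q : ℕ, ((r + k * q + n).choose n : ℝ) * x ^ q * (q : ℝ) ^ i

variable {k : ℕ} {x : ℝ}

lemma injective_progression (hk : k ≠ 0) (r : ℕ) : Function.Injective fun q : ℕ => r + k * q :=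
  fun _ _ h => by simpa [hk] using h

lemma abs_pow_lt_one (hk : k ≠ 0) (hx : |x| < 1) : |x ^ k| < 1 := by
  rw [abs_pow]
  exact pow_lt_one₀ (abs_nonneg x) hx hk

lemma summable_choose_mul_pow_progression (hk : k ≠ 0) (r n : ℕ) (hx : |x| < 1) :
    Summable fun q : ℕ => ((r + k * q + n).choose n : ℝ) * x ^ q := by
  rcases eq_or_ne x 0 with rfl | hx0
  · exact summable_of_ne_finset_zero (s := {0}) fun q hq => by simp_all
  obtain ⟨s, hs0, hs1, hsk⟩ : ∃ s : ℝ, 0 < s ∧ s < 1 ∧ s ^ k = |x| :=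
    ⟨|x| ^ (k : ℝ)⁻¹, by positivity, Real.rpow_lt_one (by positivity) hx (by positivity),
      Real.rpow_inv_natCast_pow (by positivity) hk⟩
  have hsum : Summable fun m : ℕ => ((m + n).choose n : ℝ) * s ^ m :=
    summable_choose_mul_geometric_of_norm_lt_one n (by rwa [Real.norm_of_nonneg hs0.le])
  refine .of_norm (((hsum.comp_injective (injective_progression hk r)).div_const (s ^ r)).congr
    fun q => ?_)
  simp only [Function.comp_apply, norm_mul, Real.norm_natCast, norm_pow, Real.norm_eq_abs x,
    pow_add, pow_mul, hsk]
  field_simp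

lemma weight_mul_pow_succ (hk : k ≠ 0) (r n i q : ℕ) :
    ((r + k * q + n).choose n : ℝ) * x ^ q * (q : ℝ) ^ (i + 1) =
      ((n + 1) * (((r + k * q + (n + 1)).choose (n + 1) : ℝ) * x ^ q * (q : ℝ) ^ i) -
        (r + n + 1) * (((r + k * q + n).choose n : ℝ) * x ^ q * (q : ℝ) ^ i)) / k := by
  have habsorb : ((r : ℝ) + k * q + n + 1) * (r + k * q + n).choose n =
      (r + k * q + (n + 1)).choose (n + 1) * (n + 1) := by
    exact_mod_cast Nat.add_one_mul_choose_eq (r + k * q + n) n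
  field_simp
  linear_combination x ^ q * (q : ℝ) ^ i * habsorb

lemma summable_weightMoment (hk : k ≠ 0) (r n : ℕ) (hx : |x| < 1) (i : ℕ) :
    Summable fun q : ℕ => ((r + k * q + n).choose n : ℝ) * x ^ q * (q : ℝ) ^ i := by
  induction i generalizing n with
  | zero => simpa using summable_choose_mul_pow_progression hk r n hx
  | succ i ih =>
    simp only [weight_mul_pow_succ hk]
    exact (((ih (n + 1)).mul_left _).sub ((ih n).mul_left _)).div_const _

lemma hasSum_weightMoment (hk : k ≠ 0) (r n : ℕ) (hx : |x| < 1) (i : ℕ) :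
    HasSum (fun q : ℕ => ((r + k * q + n).choose n : ℝ) * x ^ q * (q : ℝ) ^ i)
      (weightMoment k r n x i) :=
  (summable_weightMoment hk r n hx i).hasSum

lemma weightMoment_succ (hk : k ≠ 0) (r n : ℕ) (hx : |x| < 1) (i : ℕ) :
    weightMoment k r n x (i + 1) =
      ((n + 1) * weightMoment k r (n + 1) x i - (r + n + 1) * weightMoment k r n x i) / k := by
  refine HasSum.unique (hasSum_weightMoment hk r n hx (i + 1)) ?_
  simp only [weight_mul_pow_succ hk]
  exact (((hasSum_weightMoment hk r (n + 1) hx i).mul_left _).sub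
    ((hasSum_weightMoment hk r n hx i).mul_left _)).div_const _

lemma weightMoment_zero_pos (hk : k ≠ 0) (r n : ℕ) (hx0 : 0 ≤ x) (hx : |x| < 1) :
    0 < weightMoment k r n x 0 := by
  refine (summable_weightMoment hk r n hx 0).tsum_pos (fun q => by positivity) 0 ?_
  have : 0 < (r + n).choose n := Nat.choose_pos (Nat.le_add_left _ _)
  simpa

lemma weightMoment_zero_eq_choose_add (hk : k ≠ 0) (r n : ℕ) (hx : |x| < 1) :
    weightMoment k r n x 0 = (r + n).choose n + x * weightMoment k (r + k) n x 0 := by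
  rw [weightMoment, (summable_weightMoment hk r n hx 0).tsum_eq_zero_add, weightMoment,
    ← tsum_mul_left]
  congr 1
  · simp
  · refine tsum_congr fun q => ?_
    rw [show r + k * (q + 1) = r + k + k * q by ring]
    ring

lemma momA_eq_weightMoment (k : ℕ) (ε : ℝ) (r n : ℕ) :
    momA k ε r n = weightMoment k r n (ε ^ 2) 1 / weightMoment k r n (ε ^ 2) 0 := by
  simp [momA, weightMoment, pow_mul]

lemma momB_eq_weightMoment (k : ℕ) (ε : ℝ) (r n : ℕ) :
    momB k ε r n = weightMoment k r n (ε ^ 2) 2 / weightMoment k r n (ε ^ 2) 0 := by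
  simp [momB, weightMoment, pow_mul]

/-- The ratio `T_n` of the total masses of the weights of consecutive indices `n + 1` and `n`. -/
def massRatio (k r : ℕ) (x : ℝ) (n : ℕ) : ℝ :=
  weightMoment k r (n + 1) x 0 / weightMoment k r n x 0

lemma momB_sub_momA_sq (hk : k ≠ 0) {ε : ℝ} (hε : |ε| < 1) (r n : ℕ) :
    momB k ε r n - momA k ε r n ^ 2 =
      (n + 1) * massRatio k r (ε ^ 2) n *
        ((n + 2) * massRatio k r (ε ^ 2) (n + 1) - (n + 1) * massRatio k r (ε ^ 2) n - 1) /
          k ^ 2 := by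
  have hx := abs_pow_lt_one two_ne_zero hε
  have hpos (j : ℕ) := (weightMoment_zero_pos hk r j (sq_nonneg ε) hx).ne'
  have hn := hpos n
  have hn1 := hpos (n + 1)
  simp only [momA_eq_weightMoment, momB_eq_weightMoment, massRatio, weightMoment_succ hk r _ hx]
  push_cast
  field_simp
  ring

end Moments

section NormRatio

variable {k : ℕ} {ε : ℝ}

lemma norm_exp_I_mul_ofReal_mul_ofReal (f t : ℝ) : ‖Complex.exp (Complex.I * f * t)‖ = 1 := by
  simp [Complex.norm_exp]

lemma norm_deltaSec_sq (hk : k ≠ 0) (hε : |ε| < 1) (t : ℝ) (r n : ℕ) :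
    ‖deltaSec k r n ε t‖ ^ 2 = weightMoment k r n (ε ^ 2) 0 := by
  rw [deltaSec, norm_smul, norm_exp_I_mul_ofReal_mul_ofReal, one_mul]
  have h := norm_sq_tsum_smul_alphaDA_term hk r n ε t (c := 1)
    ((hasSum_weightMoment hk r n (abs_pow_lt_one two_ne_zero hε) 0).congr_fun fun q => by simp)
  simpa [alphaDA] using h

lemma norm_deltaDot_sq (hk : k ≠ 0) (hε : |ε| < 1) (t : ℝ) (r n : ℕ) :
    ‖deltaDot k r n ε t‖ ^ 2 =
      momA k ε r n ^ 2 * weightMoment k r n (ε ^ 2) 0 -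
        2 * momA k ε r n * weightMoment k r n (ε ^ 2) 1 + weightMoment k r n (ε ^ 2) 2 := by
  have hM := hasSum_weightMoment hk r n (abs_pow_lt_one two_ne_zero hε)
  simp only [deltaDot, mul_right_comm (Complex.I * _)]
  refine norm_sq_tsum_smul_alphaDA_term hk r n ε t (HasSum.congr_fun
    ((((hM 0).mul_left (momA k ε r n ^ 2)).sub ((hM 1).mul_left (2 * momA k ε r n))).add (hM 2))
    fun q => ?_)
  have hfreq : ‖(momA k ε r n : ℂ) - q‖ ^ 2 = (momA k ε r n - q) ^ 2 := by
    rw [← Complex.ofReal_natCast, ← Complex.ofReal_sub, Complex.norm_real, Real.norm_eq_abs, sq_abs]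
  rw [norm_mul, norm_mul, Complex.norm_I, one_mul, norm_exp_I_mul_ofReal_mul_ofReal, mul_one, hfreq]
  ring

lemma norm_deltaDot_div_norm_deltaSec (hk : k ≠ 0) (hε : |ε| < 1) (t : ℝ) (r n : ℕ) :
    ‖deltaDot k r n ε t‖ / ‖deltaSec k r n ε t‖ =
      √(momA k ε r n ^ 2 - 2 * momA k ε r n * momA k ε r n + momB k ε r n) := by
  have hx := abs_pow_lt_one two_ne_zero hε
  have hpos := weightMoment_zero_pos hk r n (sq_nonneg ε) hx
  rw [← Real.sqrt_sq (div_nonneg (norm_nonneg _) (norm_nonneg _)), div_pow,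
    norm_deltaSec_sq hk hε, norm_deltaDot_sq hk hε, momA_eq_weightMoment, momB_eq_weightMoment]
  congr 1
  field_simp

end NormRatio

section RootsOfUnity

lemma hasSum_progression_of_forall_addChar {k r : ℕ} [NeZero k] (hr : r < k) {f : ℕ → ℂ}
    {g : AddChar (ZMod k) ℂ → ℂ} (hg : ∀ ψ, HasSum (fun m : ℕ => ψ m * f m) (g ψ)) :
    HasSum (fun q : ℕ => k * f (r + k * q)) (∑ ψ, ψ (-r) * g ψ) := by
  have hfilter (m : ℕ) : ∑ ψ : AddChar (ZMod k) ℂ, ψ (-r) * (ψ m * f m) =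
      if (m : ZMod k) = r then k * f m else 0 := by
    simp only [← mul_assoc, ← AddChar.map_add_eq_mul]
    rw [← Finset.sum_mul, AddChar.sum_apply_eq_ite, ZMod.card]
    simp only [neg_add_eq_zero, eq_comm, ite_mul, zero_mul]
  have hsum : HasSum (fun m : ℕ => if (m : ZMod k) = r then k * f m else 0)
      (∑ ψ, ψ (-r) * g ψ) :=
    (hasSum_sum fun ψ _ => (hg ψ).mul_left (ψ (-r))).congr_fun fun m => (hfilter m).symm
  refine (((injective_progression (NeZero.ne k) r).hasSum_iff fun m hm => if_neg fun h => ?_).mpr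
    hsum).congr_fun fun q => by simp
  rw [ZMod.natCast_eq_natCast_iff', Nat.mod_eq_of_lt hr] at h
  exact hm ⟨m / k, by simp [← h, Nat.mod_add_div]⟩

lemma one_sub_lt_norm_one_sub_mul {s : ℝ} (hs : 0 < s) {z : ℂ} (hz : ‖z‖ = 1) (hz1 : z ≠ 1) :
    1 - s < ‖1 - z * s‖ := by
  have hnorm : ‖z * s‖ = s := by rw [norm_mul, hz, one_mul, Complex.norm_of_nonneg hs.le]
  have hray : ¬SameRay ℝ (1 : ℂ) (z * s) := by
    rw [sameRay_iff_norm_smul_eq, hnorm, norm_one, one_smul, Complex.real_smul, mul_one]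
    exact fun h => hz1 ((mul_eq_right₀ (by exact_mod_cast hs.ne')).mp h)
  simpa only [norm_one, hnorm] using lt_norm_sub_of_not_sameRay hray

lemma tendsto_natCast_mul_pow_of_norm_lt_one {R : Type*} [NormedRing R] [HasSummableGeomSeries R]
    {c : R} (hc : ‖c‖ < 1) : Tendsto (fun N : ℕ => (N : R) * c ^ N) atTop (nhds 0) := by
  simpa using (summable_pow_mul_geometric_of_norm_lt_one 1 hc).tendsto_atTop_zero

end RootsOfUnity

section MassAsymptotics

/-- The total mass of the weights `C(r+kq+N, N) s^{kq}`, divided by its asymptotic value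
`1 / (k s^r (1-s)^{N+1})`. -/
def normalizedMass (k r : ℕ) (s : ℝ) (N : ℕ) : ℝ :=
  k * s ^ r * (1 - s) ^ (N + 1) * weightMoment k r N (s ^ k) 0

variable {k : ℕ} {s : ℝ}

lemma normalizedMass_eq_sum_addChar [NeZero k] {r : ℕ} (hr : r < k) (hs : |s| < 1) (N : ℕ) :
    (normalizedMass k r s N : ℂ) =
      ∑ ψ : AddChar (ZMod k) ℂ, ψ (-r) * ((1 - s) / (1 - ψ 1 * s)) ^ (N + 1) := by
  have hgeom (ψ : AddChar (ZMod k) ℂ) :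
      HasSum (fun m : ℕ => ψ m * ((1 - s) ^ (N + 1) * ((m + N).choose N * (s : ℂ) ^ m)))
        (((1 - s) / (1 - ψ 1 * s)) ^ (N + 1)) := by
    have hnorm : ‖ψ 1 * s‖ < 1 := by
      rwa [norm_mul, ψ.norm_apply, one_mul, Complex.norm_real]
    have h := (hasSum_choose_mul_geometric_of_norm_lt_one N hnorm).mul_left ((1 - s : ℂ) ^ (N + 1))
    rw [mul_one_div, ← div_pow] at h
    refine h.congr_fun fun m => ?_
    rw [← nsmul_one m, AddChar.map_nsmul_eq_pow]
    ring
  have hk := NeZero.ne k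
  have hmass := (Complex.hasSum_ofReal.mpr
    (hasSum_weightMoment hk r N (abs_pow_lt_one hk hs) 0)).mul_left
    ((k * s ^ r * (1 - s) ^ (N + 1) : ℝ) : ℂ)
  rw [normalizedMass, Complex.ofReal_mul]
  refine hmass.unique ((hasSum_progression_of_forall_addChar hr hgeom).congr_fun fun q => ?_)
  push_cast
  ring

lemma tendsto_natCast_mul_normalizedMass_sub_one_of_lt [NeZero k] {r : ℕ} (hr : r < k)
    (hs0 : 0 < s) (hs1 : s < 1) :
    Tendsto (fun N : ℕ => (N : ℝ) * (normalizedMass k r s N - 1)) atTop (nhds 0) := by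
  set c : AddChar (ZMod k) ℂ → ℂ := fun ψ => (1 - s) / (1 - ψ 1 * s) with hc
  have hs : (1 - s : ℂ) ≠ 0 := by exact_mod_cast (sub_pos.mpr hs1).ne'
  have hc_lt {ψ : AddChar (ZMod k) ℂ} (hψ : ψ ≠ 1) : ‖c ψ‖ < 1 := by
    have hlt := one_sub_lt_norm_one_sub_mul hs0 (ψ.norm_apply 1)
      ((AddChar.zmod_char_ne_one_iff k ψ).mp hψ)
    have hnum : ‖(1 - s : ℂ)‖ = 1 - s := by
      exact_mod_cast Complex.norm_of_nonneg (sub_pos.mpr hs1).le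
    rwa [hc, norm_div, hnum, div_lt_one ((sub_pos.mpr hs1).trans hlt)]
  have hexpand (N : ℕ) : ((N * (normalizedMass k r s N - 1) : ℝ) : ℂ) =
      ∑ ψ ∈ Finset.univ.erase 1, ψ (-r) * c ψ * (N * c ψ ^ N) := by
    have htrivial : (1 : AddChar (ZMod k) ℂ) (-r) * c 1 ^ (N + 1) = 1 := by simp [hc, hs]
    push_cast
    rw [normalizedMass_eq_sum_addChar hr (by rwa [abs_of_pos hs0]),
      ← Finset.add_sum_erase _ _ (Finset.mem_univ (1 : AddChar (ZMod k) ℂ)), htrivial,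
      add_sub_cancel_left, Finset.mul_sum]
    exact Finset.sum_congr rfl fun ψ _ => by ring
  rw [← tendsto_ofReal_iff, Complex.ofReal_zero]
  simp only [hexpand]
  simpa using tendsto_finsetSum (Finset.univ.erase 1) fun ψ hψ =>
    (tendsto_natCast_mul_pow_of_norm_lt_one (hc_lt (Finset.ne_of_mem_erase hψ))).const_mul
      (ψ (-r) * c ψ)

lemma tendsto_natCast_mul_choose_mul_pow (r : ℕ) {y : ℝ} (hy : |y| < 1) :
    Tendsto (fun N : ℕ => (N : ℝ) * ((r + N).choose N * y ^ N)) atTop (nhds 0) := by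
  have hsum (j : ℕ) : Summable fun N : ℕ => ((N + j).choose j : ℝ) * y ^ N :=
    summable_choose_mul_geometric_of_norm_lt_one j hy
  have hzero := ((hsum (r + 1)).tendsto_atTop_zero.sub (hsum r).tendsto_atTop_zero).const_mul
    ((r : ℝ) + 1)
  rw [sub_zero, mul_zero] at hzero
  refine hzero.congr fun N => ?_
  have habsorb : ((N : ℝ) + r + 1) * (N + r).choose r = (N + (r + 1)).choose (r + 1) * (r + 1) := by
    exact_mod_cast Nat.add_one_mul_choose_eq (N + r) r
  rw [add_comm r N, Nat.choose_symm_add]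
  linear_combination -y ^ N * habsorb

lemma normalizedMass_eq_choose_add (hk : k ≠ 0) (r : ℕ) (hs : |s| < 1) (N : ℕ) :
    normalizedMass k r s N =
      k * s ^ r * (1 - s) * ((r + N).choose N * (1 - s) ^ N) + normalizedMass k (r + k) s N := by
  rw [normalizedMass, normalizedMass,
    weightMoment_zero_eq_choose_add hk r N (abs_pow_lt_one hk hs)]
  ring

lemma tendsto_natCast_mul_normalizedMass_sub_one (hk : k ≠ 0) (r : ℕ) (hs0 : 0 < s) (hs1 : s < 1) :
    Tendsto (fun N : ℕ => (N : ℝ) * (normalizedMass k r s N - 1)) atTop (nhds 0) := by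
  have : NeZero k := ⟨hk⟩
  rw [← Nat.mod_add_div r k]
  induction r / k with
  | zero => exact tendsto_natCast_mul_normalizedMass_sub_one_of_lt (Nat.mod_lt _ hk.bot_lt) hs0 hs1
  | succ j ih =>
    have hy : |1 - s| < 1 := by rw [abs_lt]; constructor <;> linarith
    have hterm := (tendsto_natCast_mul_choose_mul_pow (r % k + k * j) hy).const_mul
      (k * s ^ (r % k + k * j) * (1 - s))
    have hdiff := ih.sub hterm
    rw [mul_zero, sub_zero] at hdiff
    refine hdiff.congr fun N => ?_
    rw [normalizedMass_eq_choose_add hk _ (by rwa [abs_of_pos hs0]), mul_add_one, ← add_assoc]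
    ring

end MassAsymptotics

section VarianceAsymptotics

lemma tendsto_of_tendsto_natCast_mul_sub {u : ℕ → ℝ} {a : ℝ}
    (h : Tendsto (fun n : ℕ => (n : ℝ) * (u n - a)) atTop (nhds 0)) :
    Tendsto u atTop (nhds a) := by
  have hlim := (h.mul tendsto_inv_atTop_nhds_zero_nat).add_const a
  rw [zero_mul, zero_add] at hlim
  refine hlim.congr' ?_
  filter_upwards [eventually_ne_atTop 0] with n hn
  field_simp
  ring

lemma tendsto_natCast_mul_sub_comp_succ {u : ℕ → ℝ} {a : ℝ}
    (h : Tendsto (fun n : ℕ => (n : ℝ) * (u n - a)) atTop (nhds 0)) :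
    Tendsto (fun n : ℕ => (n : ℝ) * (u (n + 1) - a)) atTop (nhds 0) := by
  have hu := (tendsto_of_tendsto_natCast_mul_sub h).sub_const a
  have hlim := (h.sub hu).comp (tendsto_add_atTop_nat 1)
  rw [sub_self, sub_zero] at hlim
  refine hlim.congr fun n => ?_
  simp only [Function.comp_apply, Nat.cast_add, Nat.cast_one]
  ring

lemma tendsto_natCast_mul_ratio_sub_one {u : ℕ → ℝ}
    (h : Tendsto (fun n : ℕ => (n : ℝ) * (u n - 1)) atTop (nhds 0)) :
    Tendsto (fun n : ℕ => (n : ℝ) * (u (n + 1) / u n - 1)) atTop (nhds 0) := by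
  have hu := tendsto_of_tendsto_natCast_mul_sub h
  have hlim := ((tendsto_natCast_mul_sub_comp_succ h).sub h).div hu one_ne_zero
  rw [sub_zero, zero_div] at hlim
  refine hlim.congr' ?_
  filter_upwards [hu.eventually_ne one_ne_zero] with n hn
  simp only [Pi.div_apply]
  field_simp
  ring

lemma tendsto_increment_of_tendsto_natCast_mul_sub {u : ℕ → ℝ} {a : ℝ}
    (h : Tendsto (fun n : ℕ => (n : ℝ) * (u n - a)) atTop (nhds 0)) :
    Tendsto (fun n : ℕ => ((n : ℝ) + 2) * u (n + 1) - (n + 1) * u n) atTop (nhds a) := by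
  have hu := tendsto_of_tendsto_natCast_mul_sub h
  have hu1 := hu.comp (tendsto_add_atTop_nat 1)
  have hlim := ((tendsto_natCast_mul_sub_comp_succ h).sub h).add ((hu1.const_mul 2).sub hu)
  rw [sub_zero, zero_add, two_mul, add_sub_cancel_right] at hlim
  refine hlim.congr fun n => ?_
  simp only [Function.comp_apply]
  ring

variable {k : ℕ} {s : ℝ}

lemma massRatio_pow_eq_normalizedMass_div (hk : k ≠ 0) (r : ℕ) (hs0 : 0 < s) (hs1 : s < 1)
    (n : ℕ) :
    massRatio k r (s ^ k) n =
      normalizedMass k r s (n + 1) / normalizedMass k r s n * (1 - s)⁻¹ := by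
  have hs := (sub_pos.mpr hs1).ne'
  have hx : |s ^ k| < 1 := abs_pow_lt_one hk (by rwa [abs_of_pos hs0])
  have hmass := (weightMoment_zero_pos hk r n (pow_nonneg hs0.le k) hx).ne'
  rw [massRatio, normalizedMass, normalizedMass]
  field_simp
  ring

lemma tendsto_natCast_mul_massRatio_sub (hk : k ≠ 0) (r : ℕ) (hs0 : 0 < s) (hs1 : s < 1) :
    Tendsto (fun n : ℕ => (n : ℝ) * (massRatio k r (s ^ k) n - (1 - s)⁻¹)) atTop (nhds 0) := by
  have hlim := (tendsto_natCast_mul_ratio_sub_one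
    (tendsto_natCast_mul_normalizedMass_sub_one hk r hs0 hs1)).mul_const (1 - s)⁻¹
  rw [zero_mul] at hlim
  refine hlim.congr fun n => ?_
  rw [massRatio_pow_eq_normalizedMass_div hk r hs0 hs1]
  ring

lemma tendsto_momB_sub_momA_sq_div (hk : k ≠ 0) {ε : ℝ} (r : ℕ) (hs0 : 0 < s) (hs1 : s < 1)
    (hsε : s ^ k = ε ^ 2) :
    Tendsto (fun n : ℕ => (momB k ε r n - momA k ε r n ^ 2) / n) atTop
      (nhds (s / (k * (1 - s)) ^ 2)) := by
  have hs := (sub_pos.mpr hs1).ne'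
  have hε : |ε| < 1 := by
    rw [← sq_lt_one_iff_abs_lt_one, ← hsε]
    exact pow_lt_one₀ hs0.le hs1 hk
  have hrate := tendsto_natCast_mul_massRatio_sub hk r hs0 hs1
  have hsucc_div : Tendsto (fun n : ℕ => 1 + (n : ℝ)⁻¹) atTop (nhds (1 + 0)) :=
    tendsto_inv_atTop_nhds_zero_nat.const_add 1
  have hlim := ((hsucc_div.mul (tendsto_of_tendsto_natCast_mul_sub hrate)).mul
    ((tendsto_increment_of_tendsto_natCast_mul_sub hrate).sub_const 1)).div_const ((k : ℝ) ^ 2)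
  have hvalue : (1 + 0) * (1 - s)⁻¹ * ((1 - s)⁻¹ - 1) / (k : ℝ) ^ 2 = s / (k * (1 - s)) ^ 2 := by
    field_simp
    ring
  rw [hvalue] at hlim
  refine hlim.congr' ?_
  filter_upwards [eventually_ne_atTop 0] with n hn
  rw [momB_sub_momA_sq hk hε, ← hsε]
  field_simp

/-- The limit of `(B_{r,n} - A_{r,n}²)^{1/2} / n^{1/2}`, written with `|ε|^{1/k} = √s` where
`s^k = ε²`. -/
def growthConstant (k : ℕ) (ε : ℝ) : ℝ :=
  |ε| ^ (k : ℝ)⁻¹ / (k * (1 - (|ε| ^ (k : ℝ)⁻¹) ^ 2))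

variable {ε : ℝ}

lemma rpow_inv_sq_lt_one (hk : k ≠ 0) (hε : |ε| < 1) : (|ε| ^ (k : ℝ)⁻¹) ^ 2 < 1 :=
  pow_lt_one₀ (by positivity) (Real.rpow_lt_one (abs_nonneg ε) hε (by positivity)) two_ne_zero

lemma growthConstant_pos (hk : k ≠ 0) (hε0 : ε ≠ 0) (hε1 : |ε| < 1) : 0 < growthConstant k ε := by
  have := sub_pos.mpr (rpow_inv_sq_lt_one hk hε1)
  rw [growthConstant]
  positivity

lemma tendsto_sqrt_momB_sub_momA_sq_div_sqrt (hk : k ≠ 0) (hε0 : ε ≠ 0) (hε1 : |ε| < 1) (r : ℕ) :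
    Tendsto (fun n : ℕ => √(momB k ε r n - momA k ε r n ^ 2) / √n) atTop
      (nhds (growthConstant k ε)) := by
  have hroot : ((|ε| ^ (k : ℝ)⁻¹) ^ 2) ^ k = ε ^ 2 := by
    rw [pow_right_comm, Real.rpow_inv_natCast_pow (abs_nonneg ε) hk, sq_abs]
  have hlim := (tendsto_momB_sub_momA_sq_div hk r (by positivity) (rpow_inv_sq_lt_one hk hε1)
    hroot).sqrt
  rw [← div_pow, ← growthConstant, Real.sqrt_sq (growthConstant_pos hk hε0 hε1).le] at hlim
  exact hlim.congr fun n => Real.sqrt_div' _ n.cast_nonneg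

end VarianceAsymptotics

theorem statement17_general {k : ℕ} (hk : k ≠ 0) {ε : ℝ} (hε0 : ε ≠ 0) (hε1 : |ε| < 1) (t : ℝ)
    (r : ℕ) :
    (∀ n : ℕ, ‖deltaDot k r n ε t‖ / ‖deltaSec k r n ε t‖ =
      √(momA k ε r n ^ 2 - 2 * momA k ε r n * momA k ε r n + momB k ε r n)) ∧
    (∀ n : ℕ, √(momA k ε r n ^ 2 - 2 * momA k ε r n * momA k ε r n + momB k ε r n) =
      √(momB k ε r n - momA k ε r n ^ 2)) ∧
    ∃ C : ℝ, C ≠ 0 ∧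
      Tendsto (fun n : ℕ => √(momB k ε r n - momA k ε r n ^ 2) / √n) atTop (nhds C) :=
  ⟨norm_deltaDot_div_norm_deltaSec hk hε1 t r, fun n => by ring_nf, growthConstant k ε,
    (growthConstant_pos hk hε0 hε1).ne', tendsto_sqrt_momB_sub_momA_sq_div_sqrt hk hε0 hε1 r⟩

/-- with `f_{r,n} = A_{r,n}`, the ratio `‖δ̇_{r,n}(t)‖/‖δ_{r,n}(t)‖` equals
`(f² − 2fA + B)^{1/2} = (B − A²)^{1/2}`, which is unbounded in `n`, growing like `n^{1/2}`. -/
theorem statement17 (k : ℕ) (hk : 1 ≤ k) (ε t : ℝ) (hε0 : 0 < ε) (hε1 : ε < 1)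
    (r : ℕ) (hr : r ≤ k - 1) :
    (∀ n : ℕ, ‖deltaDot k r n ε t‖ / ‖deltaSec k r n ε t‖
        = Real.sqrt ((momA k ε r n) ^ 2 - 2 * momA k ε r n * momA k ε r n + momB k ε r n)) ∧
    (∀ n : ℕ, Real.sqrt ((momA k ε r n) ^ 2 - 2 * momA k ε r n * momA k ε r n + momB k ε r n)
        = Real.sqrt (momB k ε r n - (momA k ε r n) ^ 2)) ∧
    (∃ C : ℝ, C ≠ 0 ∧
      Tendsto (fun n : ℕ => Real.sqrt (momB k ε r n - (momA k ε r n) ^ 2) / Real.sqrt n)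
        atTop (nhds C)) :=
  statement17_general (by omega) hε0.ne' (by rwa [abs_of_pos hε0]) t r

end
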